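/- arXiv:1611.02213 — 2 statements merged into one kernel-verified Lean document; each statement's English description precedes it below -/
import Mathlib

section
/- Let V_0, ..., V_L and C_0, ..., C_L be positive real numbers and let epsilon > 0. For any positive real numbers n_0, ..., n_L satisfying the sampling-error constraint sum_{l=0}^L V_l/n_l <= epsilon^2/2, the total cost satisfies sum_{l=0}^L n_l * C_l >= (2/epsilon^2) * (sum_{l=0}^L sqrt(V_l * C_l))^2. -/
open Finset

/-! The bound is the Cauchy–Schwarz inequality applied to the factorization
`V l * C l = (V l / n l) * (n l * C l)`: it gives
`(∑ √(V l * C l)) ^ 2 ≤ (∑ V l / n l) * ∑ n l * C l`, and the first factor is at most `ε ^ 2 / 2`. -/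

/-- For any positive sample sizes satisfying the MLMC sampling-error constraint
`∑ V_l/n_l ≤ ε²/2`, the total cost satisfies
`∑ n_l C_l ≥ (2/ε²) (∑ √(V_l C_l))²`. -/
theorem mlmc_cost_lower_bound
    (L : ℕ) (V C : Fin (L + 1) → ℝ) (hV : ∀ l, 0 < V l) (hC : ∀ l, 0 < C l)
    (ε : ℝ) (hε : 0 < ε) (n : Fin (L + 1) → ℝ) (hn : ∀ l, 0 < n l)
    (hconstraint : ∑ l, V l / n l ≤ ε ^ 2 / 2) :
    ∑ l, n l * C l ≥ (2 / ε ^ 2) * (∑ l, Real.sqrt (V l * C l)) ^ 2 := by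
  have hcost : 0 ≤ ∑ l, n l * C l := sum_nonneg fun l _ => (mul_pos (hn l) (hC l)).le
  have hCS : (∑ l, Real.sqrt (V l * C l)) ^ 2 ≤ (∑ l, V l / n l) * ∑ l, n l * C l := by
    refine sum_sq_le_sum_mul_sum_of_sq_le_mul univ (fun l _ => (div_pos (hV l) (hn l)).le)
      (fun l _ => (mul_pos (hn l) (hC l)).le) fun l _ => le_of_eq ?_
    rw [Real.sq_sqrt (mul_pos (hV l) (hC l)).le, ← mul_assoc, div_mul_cancel₀ _ (hn l).ne']
  calc (2 / ε ^ 2) * (∑ l, Real.sqrt (V l * C l)) ^ 2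
      ≤ (2 / ε ^ 2) * (ε ^ 2 / 2 * ∑ l, n l * C l) := by
        gcongr
        exact hCS.trans (mul_le_mul_of_nonneg_right hconstraint hcost)
    _ = ∑ l, n l * C l := by field_simp
end

section
/- Let zeta > 0 and 0 < rho^2 < 1, and define f : [0, infinity) -> R by f(x) = (zeta * x + 1 + zeta) * (1 - rho^2 * x/(1 + x)), and s_1 = sqrt(rho^2/(zeta * (1 - rho^2))). If s_1 >= 1 then f attains its minimum on [0, infinity) uniquely at x* = s_1 - 1; if s_1 <= 1 then f is minimized on [0, infinity) at x* = 0, i.e. f(x) >= f(0) for all x >= 0. In both cases the minimizer is x* = max(0, s_1 - 1). -/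
/-!
With `t = 1 + x` and `c = ζ (1 - ρ²)`, so that `ρ² = c s₁²`, the objective is
`c (t + s₁² / t)` plus a constant. Hence for `t, u > 0` the difference of its values at `t` and `u`
is `c (t - u) (t u - s₁²) / (t u)`. For `u = s₁` this is `c (t - s₁)² / t`, which is nonnegative
and vanishes only at `t = s₁`; for `u = 1` and `s₁ ≤ 1` both factors are nonnegative when `t ≥ 1`.
-/

/-- Minimization of the generalized mean square error
`f(x) = (ζ x + 1 + ζ)(1 - ρ² x/(1 + x))` over `x ∈ [0, ∞)`: with
`s₁ = √(ρ²/(ζ (1 - ρ²)))`, if `s₁ ≥ 1` the minimum is attained uniquely at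
`x* = s₁ - 1`; if `s₁ ≤ 1` it is attained at `x* = 0`; in both cases
`x* = max 0 (s₁ - 1)` is a minimizer. -/
theorem mlcv_optimal_sample_ratio
    (ζ ρsq : ℝ) (hζ : 0 < ζ) (hρ0 : 0 < ρsq) (hρ1 : ρsq < 1)
    (f : ℝ → ℝ) (hf : f = fun x => (ζ * x + 1 + ζ) * (1 - ρsq * x / (1 + x)))
    (s₁ : ℝ) (hs₁ : s₁ = Real.sqrt (ρsq / (ζ * (1 - ρsq)))) :
    (1 ≤ s₁ → (∀ x : ℝ, 0 ≤ x → f (s₁ - 1) ≤ f x) ∧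
      (∀ x : ℝ, 0 ≤ x → f x = f (s₁ - 1) → x = s₁ - 1)) ∧
    (s₁ ≤ 1 → ∀ x : ℝ, 0 ≤ x → f 0 ≤ f x) ∧
    (∀ x : ℝ, 0 ≤ x → f (max 0 (s₁ - 1)) ≤ f x) := by
  have hc : 0 < ζ * (1 - ρsq) := mul_pos hζ (by linarith)
  have hsq : ζ * (1 - ρsq) * s₁ ^ 2 = ρsq := by
    rw [hs₁, Real.sq_sqrt (by positivity), mul_div_cancel₀ _ hc.ne']
  have hs0 : 0 ≤ s₁ := hs₁ ▸ Real.sqrt_nonneg _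
  have key : ∀ x y : ℝ, 0 ≤ x → 0 ≤ y → f x - f y =
      ζ * (1 - ρsq) * ((x - y) * ((1 + x) * (1 + y) - s₁ ^ 2)) / ((1 + x) * (1 + y)) := by
    intro x y hx hy
    have hx' : 1 + x ≠ 0 := by positivity
    have hy' : 1 + y ≠ 0 := by positivity
    have e : ζ * (1 - ρsq) * ((x - y) * ((1 + x) * (1 + y) - s₁ ^ 2)) =
        (x - y) * (ζ * (1 - ρsq) * ((1 + x) * (1 + y)) - ρsq) := by
      linear_combination (-(x - y)) * hsq
    rw [e, hf]
    field_simp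
    ring
  have key₁ : 1 ≤ s₁ → ∀ x : ℝ, 0 ≤ x →
      f x - f (s₁ - 1) = ζ * (1 - ρsq) * (x - (s₁ - 1)) ^ 2 / (1 + x) := by
    intro h x hx
    have hx' : 1 + x ≠ 0 := by positivity
    have hs' : s₁ ≠ 0 := by positivity
    rw [key x _ hx (by linarith), add_sub_cancel]
    field_simp
    ring
  have A : 1 ≤ s₁ → ∀ x : ℝ, 0 ≤ x → f (s₁ - 1) ≤ f x := by
    intro h x hx
    rw [← sub_nonneg, key₁ h x hx]
    positivity
  have B : s₁ ≤ 1 → ∀ x : ℝ, 0 ≤ x → f 0 ≤ f x := by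
    intro h x hx
    rw [← sub_nonneg, key x 0 hx le_rfl]
    have h1 : 0 ≤ (1 + x) * (1 + 0) - s₁ ^ 2 := by nlinarith
    have h2 : 0 ≤ x - 0 := by linarith
    positivity
  refine ⟨fun h => ⟨A h, fun x hx hfx => ?_⟩, B, ?_⟩
  · have h0 := key₁ h x hx
    rw [hfx, sub_self, eq_comm, div_eq_zero_iff] at h0
    rcases h0 with h0 | h0
    · exact sub_eq_zero.mp (pow_eq_zero_iff two_ne_zero |>.mp
        ((mul_eq_zero.mp h0).resolve_left hc.ne'))
    · linarith
  · rcases le_total s₁ 1 with h | h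
    · rw [max_eq_left (by linarith)]
      exact B h
    · rw [max_eq_right (by linarith)]
      exact A h
end
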